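/- Let G be a subgroup of PL₊(I) generated by a finite set X. If G is soluble, then the derived length of G is at most the cardinality of the set of breakpoints of the elements of X. -/

import Mathlib

open Set

namespace PLPaper

/-- We model `PL₊(I)` inside the group of bijections of `ℝ` with *opposite*
composition, so that the group acts on `ℝ` on the right:
`x · (g * h) = (x · g) · h`. -/
abbrev PermR : Type := (Equiv.Perm ℝ)ᵐᵒᵖ

/-- The (right) action of `g` on the point `x`. -/
def ap (g : PermR) (x : ℝ) : ℝ := g.unop x

/-- `g` is affine on a neighbourhood of `x`. -/
def IsLocallyAffineAt (g : PermR) (x : ℝ) : Prop :=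
  ∃ m b : ℝ, ∀ᶠ y in nhds x, ap g y = m * y + b

/-- The breakpoints of `g`: points of `(0,1)` where `g` is not locally affine
(equivalently, for a PL map, where the derivative fails to exist). -/
def Breakpoints (g : PermR) : Set ℝ :=
  {x ∈ Ioo (0:ℝ) 1 | ¬ IsLocallyAffineAt g x}

/-- `g` is an orientation-preserving piecewise-linear homeomorphism of `[0,1]`
(extended by the identity to all of `ℝ`), with finitely many breakpoints. -/
def IsPL (g : PermR) : Prop :=
  StrictMono (ap g) ∧ (∀ x ∉ Ioo (0:ℝ) 1, ap g x = x) ∧ (Breakpoints g).Finite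

/-- The support of `g`. -/
def Supp (g : PermR) : Set ℝ := {x | ap g x ≠ x}

/-- `(a,b)` is an orbital of `g`, i.e. a connected component of `Supp g`. -/
def IsOrbital (g : PermR) (a b : ℝ) : Prop :=
  a < b ∧ Ioo a b ⊆ Supp g ∧ a ∉ Supp g ∧ b ∉ Supp g

/-- The support of a subgroup `G`. -/
def GSupp (G : Subgroup PermR) : Set ℝ := ⋃ g ∈ (G : Set PermR), Supp g

/-- `(a,b)` is an orbital of the group `G`, i.e. a connected component of its support. -/
def IsGroupOrbital (G : Subgroup PermR) (a b : ℝ) : Prop :=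
  a < b ∧ Ioo a b ⊆ GSupp G ∧ a ∉ GSupp G ∧ b ∉ GSupp G

/-- The pair `g, h` carries a transition chain: orbitals `(a,b)` of `g` and
`(c,d)` of `h` with `a < c < b < d`. -/
def ElemsTransitionChain (g h : PermR) : Prop :=
  ∃ a b c d : ℝ, IsOrbital g a b ∧ IsOrbital h c d ∧ a < c ∧ c < b ∧ b < d

/-- The pair `g, h` carries a one-sided overlap: orbitals `(a,b)` of `g` and
`(a,c)` of `h`, or `(a,b)` of `g` and `(c,b)` of `h`, where `a < c < b`. -/
def ElemsOneSidedOverlap (g h : PermR) : Prop :=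
  ∃ a b c : ℝ, a < c ∧ c < b ∧
    ((IsOrbital g a b ∧ IsOrbital h a c) ∨ (IsOrbital g a b ∧ IsOrbital h c b))

def AdmitsTransitionChain (G : Subgroup PermR) : Prop :=
  ∃ g ∈ G, ∃ h ∈ G, ElemsTransitionChain g h

def AdmitsOneSidedOverlap (G : Subgroup PermR) : Prop :=
  ∃ g ∈ G, ∃ h ∈ G, ElemsOneSidedOverlap g h

/-- `G` admits a bad overlap: orbitals `A` of `f ∈ G` and `B` of `g ∈ G` which
intersect, are distinct, and neither closure is contained in the other orbital. -/
def AdmitsBadOverlap (G : Subgroup PermR) : Prop :=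
  ∃ f ∈ G, ∃ g ∈ G, ∃ a b c d : ℝ, IsOrbital f a b ∧ IsOrbital g c d ∧
    (Ioo a b ∩ Ioo c d).Nonempty ∧ Ioo a b ≠ Ioo c d ∧
    ¬ Icc a b ⊆ Ioo c d ∧ ¬ Icc c d ⊆ Ioo a b

/-- A tower: a set of signed orbitals `((a,b), g)` with pairwise nested orbitals,
where equal orbitals force equal signatures. -/
def IsTower (T : Set ((ℝ × ℝ) × PermR)) : Prop :=
  (∀ p ∈ T, IsOrbital p.2 p.1.1 p.1.2) ∧
  (∀ p ∈ T, ∀ q ∈ T,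
      Ioo p.1.1 p.1.2 ⊆ Ioo q.1.1 q.1.2 ∨ Ioo q.1.1 q.1.2 ⊆ Ioo p.1.1 p.1.2) ∧
  (∀ p ∈ T, ∀ q ∈ T, p.1 = q.1 → p.2 = q.2)

/-- `G` admits the tower `T` if `T` is a tower all of whose signatures lie in `G`. -/
def AdmitsTower (G : Subgroup PermR) (T : Set ((ℝ × ℝ) × PermR)) : Prop :=
  IsTower T ∧ ∀ p ∈ T, p.2 ∈ G

def AdmitsInfiniteTower (G : Subgroup PermR) : Prop :=
  ∃ T : Set ((ℝ × ℝ) × PermR), AdmitsTower G T ∧ T.Infinite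

/-- The set of breakpoints of the elements of a set `S`. -/
def BreakSet (S : Set PermR) : Set ℝ := ⋃ g ∈ S, Breakpoints g

/-- The derived length of a group: the least `n` with `derivedSeries G n = ⊥`. -/
noncomputable def derivedLength (G : Type*) [Group G] : ℕ :=
  sInf {n : ℕ | derivedSeries G n = ⊥}

/-! Write `G⁽ⁱ⁾` for the derived subgroups of `G`, and let `S` be a finite set whose `G`-orbits
cover all breakpoints of elements of `G`. The support of `G⁽ⁱ⁾` is `G`-invariant, so it is enough to
find, whenever `G⁽ⁱ⁾ ≠ 1`, a breakpoint lying in the support of `N = G⁽ⁱ⁾` but not in that of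
`K = G⁽ⁱ⁺¹⁾`: then `i ↦ |S ∩ supp G⁽ⁱ⁾|` drops strictly until the derived series reaches `1`.

By solubility, `K` has a fixed point in every orbital `(a, b)` of `N`. Since slopes at `b` commute,
an element of `N` fixing one point of `(a, b)` is then trivial near `b`, and some element of `N`
moves every point of `(a, b)`. Apply this to `K`: some `f ∈ K` moves every point of an orbital of
`K`. If all breakpoints of `f` in the support of `N` lie in the support of `K`, then `f` is affine
near the left end `u` of that orbital, hence also moves the points just to the left of `u`, hence
every point of the orbital of `K` ending at `u`. Repeating this yields infinitely many orbitals of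
`f`, each containing a breakpoint of `f`.
-/

open Filter Topology
open scoped commutatorElement

section Action

variable {g : PermR} {x : ℝ}

theorem ap_mul (g h : PermR) (x : ℝ) : ap (g * h) x = ap h (ap g x) := rfl

theorem ap_one (x : ℝ) : ap 1 x = x := rfl

theorem ap_inv_ap (g : PermR) (x : ℝ) : ap g⁻¹ (ap g x) = x := by
  rw [← ap_mul, mul_inv_cancel, ap_one]

theorem ap_ap_inv (g : PermR) (x : ℝ) : ap g (ap g⁻¹ x) = x := by
  rw [← ap_mul, inv_mul_cancel, ap_one]

theorem ap_ext {g h : PermR} (H : ∀ x, ap g x = ap h x) : g = h :=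
  MulOpposite.unop_injective (Equiv.ext H)

theorem ap_injective (g : PermR) : Function.Injective (ap g) := g.unop.injective

theorem ap_inv_eq_self (h : ap g x = x) : ap g⁻¹ x = x := by
  conv_lhs => rw [← h, ap_inv_ap]

theorem strictMono_ap_inv (hg : StrictMono (ap g)) : StrictMono (ap g⁻¹) := fun x y hxy ↦
  hg.lt_iff_lt.1 <| by rwa [ap_ap_inv, ap_ap_inv]

theorem continuous_ap (hg : StrictMono (ap g)) : Continuous (ap g) :=
  hg.monotone.continuous_of_surjective g.unop.surjective

theorem ap_eq_self_of_isLUB (hg : StrictMono (ap g)) {S : Set ℝ} {q : ℝ} (hq : IsLUB S q)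
    (hS : MapsTo (ap g) S S) (hS' : MapsTo (ap g⁻¹) S S) : ap g q = q := by
  apply le_antisymm
  · have : q ≤ ap g⁻¹ q := hq.2 fun s hs ↦ hg.le_iff_le.1 <| by
      rw [ap_ap_inv]; exact hq.1 (hS hs)
    simpa only [ap_ap_inv] using hg.monotone this
  · exact hq.2 fun s hs ↦ by simpa only [ap_ap_inv] using hg.monotone (hq.1 (hS' hs))

end Action

section LocallyAffine

variable {g h : PermR} {u v x : ℝ}

theorem isLocallyAffineAt_one (x : ℝ) : IsLocallyAffineAt 1 x :=
  ⟨1, 0, .of_forall fun y ↦ by rw [ap_one]; ring⟩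

theorem IsLocallyAffineAt.mul (hg : StrictMono (ap g)) (hgx : IsLocallyAffineAt g x)
    (hhx : IsLocallyAffineAt h (ap g x)) : IsLocallyAffineAt (g * h) x := by
  obtain ⟨m, b, hgx⟩ := hgx
  obtain ⟨n, c, hhx⟩ := hhx
  refine ⟨n * m, n * b + c, ?_⟩
  filter_upwards [hgx, (continuous_ap hg).continuousAt.eventually hhx] with y hgy hhy
  rw [ap_mul, hhy, hgy]
  ring

theorem IsLocallyAffineAt.inv (hg : StrictMono (ap g)) (hgx : IsLocallyAffineAt g (ap g⁻¹ x)) :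
    IsLocallyAffineAt g⁻¹ x := by
  obtain ⟨m, b, hmb⟩ := hgx
  have hm : m ≠ 0 := by
    rintro rfl
    obtain ⟨y, hy, hxy⟩ := ((hmb.filter_mono nhdsWithin_le_nhds).and self_mem_nhdsWithin :
      ∀ᶠ y in 𝓝[>] ap g⁻¹ x, _).exists
    exact (hg hxy).ne (by rw [hy, hmb.self_of_nhds, zero_mul, zero_mul])
  refine ⟨m⁻¹, -m⁻¹ * b, ?_⟩
  filter_upwards [(continuous_ap (strictMono_ap_inv hg)).continuousAt.eventually hmb] with y hy
  rw [ap_ap_inv] at hy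
  field_simp
  linarith

theorem exists_eqOn_affine {s : Set ℝ} (hs : IsPreconnected s) (ho : IsOpen s)
    (hloc : ∀ y ∈ s, IsLocallyAffineAt g y) : ∃ m b : ℝ, EqOn (ap g) (fun y ↦ m * y + b) s := by
  rcases s.eq_empty_or_nonempty with rfl | ⟨x, hx⟩
  · exact ⟨0, 0, eqOn_empty _ _⟩
  have hanalytic : AnalyticOnNhd ℝ (ap g) s := fun y hy ↦ by
    obtain ⟨m, b, hmb⟩ := hloc y hy
    exact AnalyticAt.congr (by fun_prop) (EventuallyEq.symm hmb)
  obtain ⟨m, b, hmb⟩ := hloc x hx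
  exact ⟨m, b, hanalytic.eqOn_of_preconnected_of_eventuallyEq (fun y _ ↦ by fun_prop) hs hx hmb⟩

theorem exists_eqOn_Icc_affine (hg : StrictMono (ap g)) (huv : u < v)
    (hloc : ∀ y ∈ Ioo u v, IsLocallyAffineAt g y) :
    ∃ m b : ℝ, EqOn (ap g) (fun y ↦ m * y + b) (Icc u v) := by
  obtain ⟨m, b, hmb⟩ := exists_eqOn_affine isPreconnected_Ioo isOpen_Ioo hloc
  exact ⟨m, b, closure_Ioo huv.ne ▸ hmb.closure (continuous_ap hg) (by fun_prop)⟩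

theorem eqOn_id_of_isLocallyAffineAt (hg : StrictMono (ap g))
    (hloc : ∀ y ∈ Ioo u v, IsLocallyAffineAt g y) (hu : ap g u = u) (hv : ap g v = v) :
    EqOn (ap g) id (Ioo u v) := by
  intro y hy
  have huv := hy.1.trans hy.2
  obtain ⟨m, b, hmb⟩ := exists_eqOn_Icc_affine hg huv hloc
  have hmu : u = m * u + b := hu.symm.trans (hmb (left_mem_Icc.2 huv.le))
  have hmv : v = m * v + b := hv.symm.trans (hmb (right_mem_Icc.2 huv.le))
  have hm : m = 1 := mul_right_cancel₀ (sub_pos.2 huv).ne' (by linarith)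
  rw [hmb (Ioo_subset_Icc_self hy), id, hm]
  rw [hm] at hmu
  linarith

end LocallyAffine

section PiecewiseLinear

variable {g h : PermR} {u v x : ℝ}

theorem IsPL.ap_mem_Ioo_iff (hg : IsPL g) : ap g x ∈ Ioo (0 : ℝ) 1 ↔ x ∈ Ioo (0 : ℝ) 1 := by
  have h0 : 0 < ap g x ↔ 0 < x := by simpa only [hg.2.1 0 (by simp)] using hg.1.lt_iff_lt (a := 0)
  have h1 : ap g x < 1 ↔ x < 1 := by simpa only [hg.2.1 1 (by simp)] using hg.1.lt_iff_lt (b := 1)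
  rw [mem_Ioo, mem_Ioo, h0, h1]

theorem IsPL.supp_subset (hg : IsPL g) : Supp g ⊆ Ioo 0 1 := fun x hx ↦
  by_contra fun h ↦ hx (hg.2.1 x h)

theorem isLocallyAffineAt_of_notMem_breakpoints (hx : x ∈ Ioo (0 : ℝ) 1)
    (h : x ∉ Breakpoints g) : IsLocallyAffineAt g x :=
  not_not.1 fun hn ↦ h ⟨hx, hn⟩

theorem breakpoints_one : Breakpoints 1 = ∅ :=
  eq_empty_of_forall_notMem fun x hx ↦ hx.2 (isLocallyAffineAt_one x)

theorem breakpoints_mul_subset (hg : IsPL g) :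
    Breakpoints (g * h) ⊆ Breakpoints g ∪ ap g ⁻¹' Breakpoints h := by
  rintro x ⟨hx, hgh⟩
  by_contra hn
  rw [mem_union, not_or] at hn
  exact hgh (.mul hg.1 (isLocallyAffineAt_of_notMem_breakpoints hx hn.1)
    (isLocallyAffineAt_of_notMem_breakpoints (hg.ap_mem_Ioo_iff.2 hx) hn.2))

theorem breakpoints_inv_subset (hg : IsPL g) : Breakpoints g⁻¹ ⊆ ap g⁻¹ ⁻¹' Breakpoints g := by
  rintro x ⟨hx, hginv⟩
  exact ⟨hg.ap_mem_Ioo_iff.1 (by rwa [ap_ap_inv]), fun hgx ↦ hginv (.inv hg.1 hgx)⟩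

theorem exists_ap_eq_of_mem_breakpoints_closure {X : Set PermR}
    (hPL : ∀ g ∈ Subgroup.closure X, IsPL g) (hg : g ∈ Subgroup.closure X) :
    ∀ z ∈ Breakpoints g, ∃ s ∈ BreakSet X, ∃ k ∈ Subgroup.closure X, ap k s = z := by
  induction hg using Subgroup.closure_induction with
  | mem g hg => exact fun z hz ↦ ⟨z, mem_biUnion hg hz, 1, one_mem _, rfl⟩
  | one => simp [breakpoints_one]
  | mul g h hg _ ihg ihh =>
    intro z hz
    rcases breakpoints_mul_subset (hPL g hg) hz with hz | hz
    · exact ihg z hz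
    · obtain ⟨s, hs, k, hk, hks⟩ := ihh _ hz
      exact ⟨s, hs, k * g⁻¹, mul_mem hk (inv_mem hg), by rw [ap_mul, hks, ap_inv_ap]⟩
  | inv g hg ih =>
    intro z hz
    obtain ⟨s, hs, k, hk, hks⟩ := ih _ (breakpoints_inv_subset (hPL g hg) hz)
    exact ⟨s, hs, k * g, mul_mem hk hg, by rw [ap_mul, hks, ap_ap_inv]⟩

theorem IsPL.exists_mem_breakpoints (hg : IsPL g) (huv : IsOrbital g u v) :
    ∃ z ∈ Ioo u v, z ∈ Breakpoints g := by
  obtain ⟨hlt, hsupp, hu, hv⟩ := huv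
  by_contra! hno
  obtain ⟨x, hx⟩ := nonempty_Ioo.2 hlt
  refine hsupp hx (eqOn_id_of_isLocallyAffineAt hg.1 (fun y hy ↦ ?_) (not_not.1 hu)
    (not_not.1 hv) hx)
  exact isLocallyAffineAt_of_notMem_breakpoints (hg.supp_subset (hsupp hy)) (hno y hy)

end PiecewiseLinear

section Germs

variable {g : PermR} {l : Filter ℝ} {t : ℝ} {H : Subgroup PermR}

/-- Along the filter `l`, the map `g` is eventually a homothety centred at `t`. With `l = 𝓝[<] t`
this describes the left germ at `t` of a PL homeomorphism fixing `t`. -/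
def HasLinearGerm (g : PermR) (l : Filter ℝ) (t : ℝ) : Prop :=
  ∃ m : ℝ, ∀ᶠ y in l, ap g y = t + m * (y - t)

theorem HasLinearGerm.eventually_eq_or_eventually_ne (hg : HasLinearGerm g l t) :
    (∀ᶠ y in l, ap g y = y) ∨ ∀ᶠ y in l, y ≠ t → ap g y ≠ y := by
  obtain ⟨m, hm⟩ := hg
  by_cases h1 : m = 1
  · left
    filter_upwards [hm] with y hy
    rw [hy, h1]
    ring
  · right
    filter_upwards [hm] with y hy hyt hfix
    exact h1 (mul_right_cancel₀ (sub_ne_zero.2 hyt) (by linarith))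

theorem IsLocallyAffineAt.hasLinearGerm (hg : IsLocallyAffineAt g t) (ht : ap g t = t) :
    HasLinearGerm g (𝓝 t) t := by
  obtain ⟨m, b, hmb⟩ := hg
  have htb := hmb.self_of_nhds
  refine ⟨m, ?_⟩
  filter_upwards [hmb] with y hy
  linarith

theorem IsPL.hasLinearGerm_nhdsLT (hg : IsPL g) (ht : t ∈ Ioc (0 : ℝ) 1) (hgt : ap g t = t) :
    HasLinearGerm g (𝓝[<] t) t := by
  have hnobreak : ∀ᶠ y in 𝓝[<] t, y ∉ Breakpoints g :=
    nhdsLT_le_nhdsNE t (nhdsNE_le_cofinite t hg.2.2.compl_mem_cofinite)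
  have hloc : ∀ᶠ y in 𝓝[<] t, IsLocallyAffineAt g y := by
    filter_upwards [hnobreak, Ioo_mem_nhdsLT ht.1] with y hy hy01
    exact isLocallyAffineAt_of_notMem_breakpoints ⟨hy01.1, hy01.2.trans_le ht.2⟩ hy
  obtain ⟨u, hut, hu⟩ := mem_nhdsLT_iff_exists_Ioo_subset.1 hloc
  obtain ⟨m, b, hmb⟩ := exists_eqOn_Icc_affine hg.1 hut hu
  have htb : t = m * t + b := hgt.symm.trans (hmb (right_mem_Icc.2 (le_of_lt hut)))
  refine ⟨m, ?_⟩
  filter_upwards [Ioo_mem_nhdsLT hut] with y hy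
  rw [hmb (Ioo_subset_Icc_self hy)]
  linarith

theorem tendsto_ap_nhdsLT (hg : StrictMono (ap g)) (ht : ap g t = t) :
    Tendsto (ap g) (𝓝[<] t) (𝓝[<] t) := by
  have hmaps : MapsTo (ap g) (Iio t) (Iio t) := fun y hy ↦ (hg hy).trans_eq ht
  have htend := ((continuous_ap hg).continuousWithinAt (x := t)).tendsto_nhdsWithin hmaps
  rwa [ht] at htend

/-- The maps with trivial germ along `l`. -/
def germFixer (l : Filter ℝ) : Subgroup PermR where
  carrier := {g | ∀ᶠ y in l, ap g y = y}
  one_mem' := .of_forall ap_one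
  mul_mem' hg hh := by
    filter_upwards [hg, hh] with y hgy hhy
    rw [ap_mul, hgy, hhy]
  inv_mem' hg := by
    filter_upwards [hg] with y hy
    exact ap_inv_eq_self hy

/-- Homotheties with a common centre commute. -/
theorem commutator_le_germFixer (hlin : ∀ h ∈ H, HasLinearGerm h l t)
    (htend : ∀ h ∈ H, Tendsto (ap h) l l) : ⁅H, H⁆ ≤ germFixer l := by
  refine Subgroup.commutator_le.2 fun g hg h hh ↦ ?_
  obtain ⟨m, hm⟩ := hlin g hg
  obtain ⟨n, hn⟩ := hlin h hh
  filter_upwards [hm, hn, (htend g hg).eventually hn, (htend h hh).eventually hm]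
    with y hgy hhy hhgy hghy
  have hcomm : ap (g * h) y = ap (h * g) y := by
    rw [ap_mul, ap_mul, hhgy, hghy, hgy, hhy]
    ring
  rw [commutatorElement_def, mul_assoc, ← mul_inv_rev, ap_mul, hcomm, ap_inv_ap]

end Germs

section Support

variable {G H K : Subgroup PermR} {g h : PermR} {x : ℝ}

theorem mem_GSupp : x ∈ GSupp H ↔ ∃ h ∈ H, ap h x ≠ x := by
  simp [GSupp, Supp]

theorem notMem_GSupp : x ∉ GSupp H ↔ ∀ h ∈ H, ap h x = x := by
  simp [mem_GSupp]

theorem GSupp_mono (hKH : K ≤ H) : GSupp K ⊆ GSupp H := biUnion_mono hKH fun _ _ ↦ Subset.rfl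

theorem GSupp_bot : GSupp ⊥ = ∅ :=
  eq_empty_of_forall_notMem fun x ↦ notMem_GSupp.2 fun h hh ↦ by
    rw [Subgroup.mem_bot.1 hh, ap_one]

theorem GSupp_nonempty (hH : H ≠ ⊥) : (GSupp H).Nonempty := by
  obtain ⟨h, hh, hne⟩ := H.bot_or_exists_ne_one.resolve_left hH
  by_contra! hempty
  exact hne (ap_ext fun x ↦ notMem_GSupp.1 (hempty ▸ notMem_empty x) h hh)

theorem GSupp_subset_Ioo (hPL : ∀ h ∈ H, IsPL h) : GSupp H ⊆ Ioo 0 1 :=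
  iUnion₂_subset fun h hh ↦ (hPL h hh).supp_subset

theorem isOpen_GSupp (hmono : ∀ h ∈ H, StrictMono (ap h)) : IsOpen (GSupp H) :=
  isOpen_biUnion fun h hh ↦ isOpen_ne_fun (continuous_ap (hmono h hh)) continuous_id

theorem ap_mem_GSupp_iff (hnorm : G ≤ Subgroup.normalizer (H : Set PermR)) (hg : g ∈ G) :
    ap g x ∈ GSupp H ↔ x ∈ GSupp H := by
  have hfix : ∀ g ∈ G, ∀ x, x ∉ GSupp H → ap g x ∉ GSupp H := by
    intro g hg x hx
    refine notMem_GSupp.2 fun h hh ↦ ap_injective g⁻¹ ?_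
    have := notMem_GSupp.1 hx _ (Subgroup.le_normalizer_iff.1 hnorm g hg h hh)
    rwa [ap_inv_ap, ← ap_mul, ← ap_mul, ← mul_assoc]
  refine not_iff_not.1 ⟨fun hgx ↦ ?_, hfix g hg x⟩
  simpa only [ap_inv_ap] using hfix g⁻¹ (inv_mem hg) _ hgx

theorem ap_comm_of_notMem_GSupp_commutator (hx : x ∉ GSupp ⁅H, H⁆) (hg : g ∈ H) (hh : h ∈ H) :
    ap g (ap h x) = ap h (ap g x) := by
  have := notMem_GSupp.1 hx _ (Subgroup.commutator_mem_commutator hh hg)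
  apply ap_injective h⁻¹
  apply ap_injective g⁻¹
  rw [ap_inv_ap, ap_inv_ap]
  exact this

end Support

section Orbitals

variable {H : Subgroup PermR} {g h : PermR} {a b o x y : ℝ}

theorem exists_mem_Ioo_subset_of_isOpen {α : Type*} [ConditionallyCompleteLinearOrder α]
    [TopologicalSpace α] [OrderTopology α] {U : Set α} {s t x : α} (hU : IsOpen U) (hs : s ∉ U)
    (ht : t ∉ U) (hxU : x ∈ U) (hx : x ∈ Icc s t) :
    ∃ a b, a ∉ U ∧ b ∉ U ∧ x ∈ Ioo a b ∧ Ioo a b ⊆ U := by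
  obtain ⟨a, ⟨⟨-, hax⟩, haU⟩, ha⟩ := (isCompact_Icc.inter_right hU.isClosed_compl :
    IsCompact (Icc s x ∩ Uᶜ)).exists_isGreatest ⟨s, ⟨le_rfl, hx.1⟩, hs⟩
  obtain ⟨b, ⟨⟨hxb, -⟩, hbU⟩, hb⟩ := (isCompact_Icc.inter_right hU.isClosed_compl :
    IsCompact (Icc x t ∩ Uᶜ)).exists_isLeast ⟨t, ⟨hx.2, le_rfl⟩, ht⟩
  have hax : a < x := hax.lt_of_ne (by rintro rfl; exact haU hxU)
  have hxb : x < b := hxb.lt_of_ne (by rintro rfl; exact hbU hxU)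
  refine ⟨a, b, haU, hbU, ⟨hax, hxb⟩, fun y hy ↦ by_contra fun hyU ↦ ?_⟩
  have hsa : s ≤ a := by
    by_contra! has
    exact (ha ⟨⟨le_rfl, hx.1⟩, hs⟩).not_gt has
  have hbt : b ≤ t := by
    by_contra! htb
    exact (hb ⟨⟨hx.2, le_rfl⟩, ht⟩).not_gt htb
  rcases le_total y x with hyx | hxy
  · exact (ha ⟨⟨hsa.trans hy.1.le, hyx⟩, hyU⟩).not_gt hy.1
  · exact (hb ⟨⟨hxy, hy.2.le.trans hbt⟩, hyU⟩).not_gt hy.2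

theorem exists_isGroupOrbital (hPL : ∀ h ∈ H, IsPL h) (hx : x ∈ GSupp H) :
    ∃ a b, IsGroupOrbital H a b ∧ x ∈ Ioo a b := by
  have hsub := GSupp_subset_Ioo hPL
  obtain ⟨a, b, ha, hb, hxab, hab⟩ := exists_mem_Ioo_subset_of_isOpen
    (isOpen_GSupp fun h hh ↦ (hPL h hh).1) (fun h0 ↦ (hsub h0).1.false)
    (fun h1 ↦ (hsub h1).2.false) hx (Ioo_subset_Icc_self (hsub hx))
  exact ⟨a, b, ⟨hxab.1.trans hxab.2, hab, ha, hb⟩, hxab⟩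

theorem exists_isGroupOrbital_of_Ioo_subset (hPL : ∀ h ∈ H, IsPL h) (hab : a < b)
    (hsub : Ioo a b ⊆ GSupp H) (hb : b ∉ GSupp H) : ∃ p, IsGroupOrbital H p b := by
  obtain ⟨x, hx⟩ := nonempty_Ioo.2 hab
  obtain ⟨p, q, hpq, hxpq⟩ := exists_isGroupOrbital hPL (hsub hx)
  obtain rfl : q = b := by
    apply le_antisymm
    · by_contra! hbq
      exact hb (hpq.2.1 ⟨hxpq.1.trans hx.2, hbq⟩)
    · by_contra! hqb
      exact hpq.2.2.2 (hsub ⟨hx.1.trans hxpq.2, hqb⟩)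
  exact ⟨p, hpq⟩

namespace IsGroupOrbital

theorem ap_left (hab : IsGroupOrbital H a b) (hh : h ∈ H) : ap h a = a :=
  notMem_GSupp.1 hab.2.2.1 h hh

theorem ap_right (hab : IsGroupOrbital H a b) (hh : h ∈ H) : ap h b = b :=
  notMem_GSupp.1 hab.2.2.2 h hh

theorem ap_mem_Ioo (hab : IsGroupOrbital H a b) (hmono : StrictMono (ap h)) (hh : h ∈ H)
    (hx : x ∈ Ioo a b) : ap h x ∈ Ioo a b :=
  ⟨(hab.ap_left hh).symm.trans_lt (hmono hx.1), (hmono hx.2).trans_eq (hab.ap_right hh)⟩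

theorem right_mem_Ioc (hab : IsGroupOrbital H a b) (hPL : ∀ h ∈ H, IsPL h) :
    b ∈ Ioc (0 : ℝ) 1 := by
  obtain ⟨h0a, hb1⟩ := (Ioo_subset_Ioo_iff hab.1).1 (hab.2.1.trans (GSupp_subset_Ioo hPL))
  exact ⟨h0a.trans_lt hab.1, hb1⟩

theorem exists_lt_ap (hab : IsGroupOrbital H a b) (hmono : ∀ h ∈ H, StrictMono (ap h))
    (hx : x ∈ Ioo a b) (hy : y < b) : ∃ h ∈ H, y < ap h x := by
  by_contra! hle
  set S : Set ℝ := {s | ∃ h ∈ H, ap h x = s}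
  have hxS : x ∈ S := ⟨1, one_mem H, ap_one x⟩
  have hyS : y ∈ upperBounds S := by rintro _ ⟨h, hh, rfl⟩; exact hle h hh
  have hmaps : ∀ h ∈ H, MapsTo (ap h) S S := by
    rintro h hh _ ⟨k, hk, rfl⟩
    exact ⟨k * h, mul_mem hk hh, ap_mul k h x⟩
  have hq : IsLUB S (sSup S) := isLUB_csSup ⟨x, hxS⟩ ⟨y, hyS⟩
  refine notMem_GSupp.2 (fun h hh ↦ ?_)
    (hab.2.1 ⟨hx.1.trans_le (hq.1 hxS), (hq.2 hyS).trans_lt hy⟩)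
  exact ap_eq_self_of_isLUB (hmono h hh) hq (hmaps h hh) (hmaps h⁻¹ (inv_mem hh))

theorem exists_ap_lt (hab : IsGroupOrbital H a b) (hmono : ∀ h ∈ H, StrictMono (ap h))
    (hx : x ∈ Ioo a b) (hy : y ∈ Ioo a b) : ∃ h ∈ H, ap h x < y := by
  obtain ⟨h, hh, hxy⟩ := hab.exists_lt_ap hmono hy hx.2
  exact ⟨h⁻¹, inv_mem hh, (hmono h hh).lt_iff_lt.1 (by rwa [ap_ap_inv])⟩

theorem exists_ap_of_eventually (hab : IsGroupOrbital H a b)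
    (hmono : ∀ h ∈ H, StrictMono (ap h)) (hx : x ∈ Ioo a b) {p : ℝ → Prop}
    (hp : ∀ᶠ y in 𝓝[<] b, p y) : ∃ h ∈ H, p (ap h x) := by
  obtain ⟨c, hcb, hc⟩ := mem_nhdsLT_iff_exists_Ioo_subset.1 hp
  obtain ⟨h, hh, hch⟩ := hab.exists_lt_ap hmono hx hcb
  exact ⟨h, hh, hc ⟨hch, (hab.ap_mem_Ioo (hmono h hh) hh hx).2⟩⟩

theorem commutator_le_germFixer (hab : IsGroupOrbital H a b) (hPL : ∀ h ∈ H, IsPL h) :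
    ⁅H, H⁆ ≤ germFixer (𝓝[<] b) :=
  PLPaper.commutator_le_germFixer
    (fun h hh ↦ (hPL h hh).hasLinearGerm_nhdsLT (hab.right_mem_Ioc hPL) (hab.ap_right hh))
    fun h hh ↦ tendsto_ap_nhdsLT (hPL h hh).1 (hab.ap_right hh)

theorem ap_eq_self_of_mem_germFixer (hab : IsGroupOrbital H a b)
    (hmono : ∀ h ∈ H, StrictMono (ap h)) (ho : o ∈ Ioo a b) (hoH : o ∉ GSupp ⁅H, H⁆)
    (hg : g ∈ H) (hgerm : g ∈ germFixer (𝓝[<] b)) : ap g o = o := by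
  obtain ⟨h, hh, hgh⟩ := hab.exists_ap_of_eventually hmono ho hgerm
  exact ap_injective h (by rw [← ap_comm_of_notMem_GSupp_commutator hoH hg hh, hgh])

theorem exists_notMem_GSupp_commutator_ap_eq_self (hab : IsGroupOrbital H a b)
    (hmono : ∀ h ∈ H, StrictMono (ap h)) (ho : o ∈ Ioo a b) (hoH : o ∉ GSupp ⁅H, H⁆)
    (hg : g ∈ H) (hy : y ∈ Ioo a b) (hgy : ap g y = y) :
    ∃ q ∈ Ioo a b, q ∉ GSupp ⁅H, H⁆ ∧ ap g q = q := by
  set S : Set ℝ := {s | (∃ h ∈ H, ap h o = s) ∧ s ≤ y}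
  obtain ⟨h, hh, hhy⟩ := hab.exists_ap_lt hmono ho hy
  have hhS : ap h o ∈ S := ⟨⟨h, hh, rfl⟩, hhy.le⟩
  have hq : IsLUB S (sSup S) := isLUB_csSup ⟨_, hhS⟩ ⟨y, fun s hs ↦ hs.2⟩
  have hmaps : ∀ k ∈ H, ap k y = y → MapsTo (ap k) S S := by
    rintro k hk hky _ ⟨⟨h, hh, rfl⟩, hle⟩
    exact ⟨⟨h * k, mul_mem hh hk, ap_mul h k o⟩, ((hmono k hk).monotone hle).trans_eq hky⟩
  have hSH : S ⊆ (GSupp ⁅H, H⁆)ᶜ := by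
    rintro _ ⟨⟨h, hh, rfl⟩, -⟩
    exact (ap_mem_GSupp_iff (Subgroup.normalizer_commutator_ge_left H H) hh).not.2 hoH
  refine ⟨sSup S, ⟨?_, (hq.2 fun s hs ↦ hs.2).trans_lt hy.2⟩, ?_, ?_⟩
  · exact (hab.ap_mem_Ioo (hmono h hh) hh ho).1.trans_le (hq.1 hhS)
  · have hopen := isOpen_GSupp fun h hh ↦ hmono h (Subgroup.commutator_le_self H hh)
    exact closure_minimal hSH hopen.isClosed_compl (hq.mem_closure ⟨_, hhS⟩)
  · exact ap_eq_self_of_isLUB (hmono g hg) hq (hmaps g hg hgy)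
      (hmaps g⁻¹ (inv_mem hg) (ap_inv_eq_self hgy))

theorem mem_germFixer_of_ap_eq_self (hab : IsGroupOrbital H a b) (hPL : ∀ h ∈ H, IsPL h)
    (ho : o ∈ Ioo a b) (hoH : o ∉ GSupp ⁅H, H⁆) (hg : g ∈ H) (hy : y ∈ Ioo a b)
    (hgy : ap g y = y) : g ∈ germFixer (𝓝[<] b) := by
  have hmono : ∀ h ∈ H, StrictMono (ap h) := fun h hh ↦ (hPL h hh).1
  obtain ⟨q, hq, hqH, hgq⟩ :=
    hab.exists_notMem_GSupp_commutator_ap_eq_self hmono ho hoH hg hy hgy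
  have hlin := (hPL g hg).hasLinearGerm_nhdsLT (hab.right_mem_Ioc hPL) (hab.ap_right hg)
  -- `g` commutes at `q` with all of `H`, so it fixes the `H`-orbit of `q`, which reaches up to `b`.
  refine hlin.eventually_eq_or_eventually_ne.resolve_right fun hne ↦ ?_
  obtain ⟨h, hh, hne⟩ := hab.exists_ap_of_eventually hmono hq hne
  refine hne (hab.ap_mem_Ioo (hmono h hh) hh hq).2.ne ?_
  rw [ap_comm_of_notMem_GSupp_commutator hqH hg hh, hgq]

theorem isOrbital_of_notMem_germFixer (hab : IsGroupOrbital H a b) (hPL : ∀ h ∈ H, IsPL h)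
    (ho : o ∈ Ioo a b) (hoH : o ∉ GSupp ⁅H, H⁆) (hg : g ∈ H)
    (hgerm : g ∉ germFixer (𝓝[<] b)) : IsOrbital g a b :=
  ⟨hab.1, fun _ hy hgy ↦ hgerm (hab.mem_germFixer_of_ap_eq_self hPL ho hoH hg hy hgy),
    not_not.2 (hab.ap_left hg), not_not.2 (hab.ap_right hg)⟩

theorem exists_isOrbital (hab : IsGroupOrbital H a b) (hPL : ∀ h ∈ H, IsPL h)
    (ho : o ∈ Ioo a b) (hoH : o ∉ GSupp ⁅H, H⁆) : ∃ g ∈ H, IsOrbital g a b := by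
  have hmono : ∀ h ∈ H, StrictMono (ap h) := fun h hh ↦ (hPL h hh).1
  obtain ⟨g, hg, hog⟩ := hab.exists_lt_ap hmono ho ho.2
  refine ⟨g, hg, hab.isOrbital_of_notMem_germFixer hPL ho hoH hg fun hgerm ↦ ?_⟩
  exact hog.ne' (hab.ap_eq_self_of_mem_germFixer hmono ho hoH hg hgerm)

end IsGroupOrbital

end Orbitals

section DerivedSubgroup

variable {α : Type*} [Group α] {G : Subgroup α} {n : ℕ}

/-- The `n`-th derived subgroup of `G`, as a subgroup of the ambient group. -/
def derivedSubgroup (G : Subgroup α) (n : ℕ) : Subgroup α := (derivedSeries G n).map G.subtype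

theorem derivedSubgroup_succ (G : Subgroup α) (n : ℕ) :
    derivedSubgroup G (n + 1) = ⁅derivedSubgroup G n, derivedSubgroup G n⁆ :=
  Subgroup.map_commutator _ _ _

theorem derivedSubgroup_le (G : Subgroup α) (n : ℕ) : derivedSubgroup G n ≤ G :=
  Subgroup.map_subtype_le _

theorem derivedSubgroup_anti (G : Subgroup α) : Antitone (derivedSubgroup G) := fun _ _ h ↦
  Subgroup.map_mono (derivedSeries_antitone G h)

theorem le_normalizer_derivedSubgroup (G : Subgroup α) (n : ℕ) :
    G ≤ Subgroup.normalizer (derivedSubgroup G n : Set α) := by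
  have h := Subgroup.le_normalizer_map (H := derivedSeries G n) G.subtype
  rwa [Subgroup.normalizer_eq_top, ← MonoidHom.range_eq_map, Subgroup.range_subtype] at h

theorem derivedSubgroup_eq_bot_iff : derivedSubgroup G n = ⊥ ↔ derivedSeries G n = ⊥ :=
  Subgroup.map_eq_bot_iff_of_injective _ G.subtype_injective

end DerivedSubgroup

section FixedPoints

variable {G H K M N : Subgroup PermR} {f : PermR} {a b u v : ℝ} {n : ℕ}

/-- Every orbital of `N` contains a point fixed by `K`. For the derived subgroups `N = G⁽ⁱ⁾` and
`K = G⁽ⁱ⁺¹⁾`, this is what solubility of `G` contributes to the argument. -/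
def HasFixedPointInOrbitals (K N : Subgroup PermR) : Prop :=
  ∀ a b, IsGroupOrbital N a b → ∃ o ∈ Ioo a b, o ∉ GSupp K

theorem IsGroupOrbital.commutator (habH : IsGroupOrbital H a b) (hPL : ∀ h ∈ H, IsPL h)
    (hM : M ≤ ⁅H, H⁆) (habM : IsGroupOrbital M a b) : IsGroupOrbital ⁅M, M⁆ a b := by
  have hle := GSupp_mono (Subgroup.commutator_le_self M)
  refine ⟨habM.1, fun o ho ↦ by_contra fun hoM ↦ ?_, fun ha ↦ habM.2.2.1 (hle ha),
    fun hb ↦ habM.2.2.2 (hle hb)⟩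
  have hmono : ∀ m ∈ M, StrictMono (ap m) := fun m hm ↦
    (hPL m (Subgroup.commutator_le_self H (hM hm))).1
  exact notMem_GSupp.2 (fun m hm ↦ habM.ap_eq_self_of_mem_germFixer hmono ho hoM hm
    (habH.commutator_le_germFixer hPL (hM hm))) (habM.2.1 ho)

theorem hasFixedPointInOrbitals_derivedSubgroup (hPL : ∀ g ∈ G, IsPL g)
    (hn : derivedSubgroup G n = ⊥) (i : ℕ) :
    HasFixedPointInOrbitals (derivedSubgroup G (i + 1)) (derivedSubgroup G i) := by
  intro a b hab
  by_contra! hsupp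
  have horb : ∀ k, IsGroupOrbital (derivedSubgroup G (i + 1 + k)) a b := by
    intro k
    induction k with
    | zero =>
      have hle := GSupp_mono (derivedSubgroup_anti G i.le_succ)
      exact ⟨hab.1, hsupp, fun ha ↦ hab.2.2.1 (hle ha), fun hb ↦ hab.2.2.2 (hle hb)⟩
    | succ k ih =>
      rw [← add_assoc, derivedSubgroup_succ]
      refine hab.commutator (fun g hg ↦ hPL g (derivedSubgroup_le G i hg)) ?_ ih
      exact (derivedSubgroup_anti G (Nat.le_add_right _ _)).trans (derivedSubgroup_succ G i).le
  obtain ⟨x, hx⟩ := nonempty_Ioo.2 hab.1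
  have hxn := GSupp_mono (derivedSubgroup_anti G (Nat.le_add_left n (i + 1))) ((horb n).2.1 hx)
  rwa [hn, GSupp_bot] at hxn

theorem IsGroupOrbital.left_mem_GSupp (huv : IsGroupOrbital K u v) (hPL : ∀ g ∈ N, IsPL g)
    (hKN : K ≤ N) (hnorm : N ≤ Subgroup.normalizer (K : Set PermR))
    (hfix : HasFixedPointInOrbitals K N) : u ∈ GSupp N := by
  obtain ⟨x, hx⟩ := nonempty_Ioo.2 huv.1
  obtain ⟨a, b, hab, hxab⟩ := exists_isGroupOrbital hPL (GSupp_mono hKN (huv.2.1 hx))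
  obtain ⟨o, ho, hoK⟩ := hfix a b hab
  obtain ⟨h, hh, hox⟩ := hab.exists_ap_lt (fun g hg ↦ (hPL g hg).1) ho hxab
  have hhoK : ap h o ∉ GSupp K := (ap_mem_GSupp_iff hnorm hh).not.2 hoK
  have hou : ap h o ≤ u := by
    by_contra! hlt
    exact hhoK (huv.2.1 ⟨hlt, hox.trans hx.2⟩)
  exact hab.2.1 ⟨(hab.ap_mem_Ioo (hPL h hh).1 hh ho).1.trans_le hou, hx.1.trans hxab.2⟩

theorem IsGroupOrbital.exists_isOrbital_left (huv : IsGroupOrbital K u v)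
    (hPL : ∀ g ∈ K, IsPL g) (hfix : HasFixedPointInOrbitals ⁅K, K⁆ K) (hf : f ∈ K)
    (hfuv : IsOrbital f u v) (hfu : IsLocallyAffineAt f u) :
    ∃ p, IsGroupOrbital K p u ∧ IsOrbital f p u := by
  have hmoves : ∀ᶠ y in 𝓝 u, y ≠ u → ap f y ≠ y := by
    refine (hfu.hasLinearGerm (huv.ap_left hf)).eventually_eq_or_eventually_ne.resolve_left
      fun hid ↦ ?_
    obtain ⟨y, hfy, hy⟩ :=
      ((hid.filter_mono nhdsWithin_le_nhds).and (Ioo_mem_nhdsGT hfuv.1)).exists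
    exact hfuv.2.1 hy hfy
  have hmovesLT : ∀ᶠ y in 𝓝[<] u, ap f y ≠ y := by
    filter_upwards [hmoves.filter_mono nhdsWithin_le_nhds, self_mem_nhdsWithin] with y hy hyu
    exact hy (ne_of_lt hyu)
  have hgerm : f ∉ germFixer (𝓝[<] u) := fun hid ↦ by
    obtain ⟨y, hne, heq⟩ := (hmovesLT.and hid).exists
    exact hne heq
  obtain ⟨c, hcu, hc⟩ := mem_nhdsLT_iff_exists_Ioo_subset.1 hmovesLT
  have hcK : Ioo c u ⊆ GSupp K := fun y hy ↦ mem_GSupp.2 ⟨f, hf, hc hy⟩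
  obtain ⟨p, hpu⟩ := exists_isGroupOrbital_of_Ioo_subset hPL hcu hcK huv.2.2.1
  obtain ⟨o, ho, hoK⟩ := hfix p u hpu
  exact ⟨p, hpu, hpu.isOrbital_of_notMem_germFixer hPL ho hoK hf hgerm⟩

theorem exists_isOrbital_of_ne_bot (hPL : ∀ g ∈ K, IsPL g)
    (hfix : HasFixedPointInOrbitals ⁅K, K⁆ K) (hK : K ≠ ⊥) :
    ∃ f ∈ K, ∃ u v, IsGroupOrbital K u v ∧ IsOrbital f u v := by
  obtain ⟨x, hx⟩ := GSupp_nonempty hK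
  obtain ⟨u, v, huv, -⟩ := exists_isGroupOrbital hPL hx
  obtain ⟨o, ho, hoK⟩ := hfix u v huv
  obtain ⟨f, hf, hfuv⟩ := huv.exists_isOrbital hPL ho hoK
  exact ⟨f, hf, u, v, huv, hfuv⟩

theorem exists_mem_breakpoints_GSupp_diff (hPL : ∀ g ∈ N, IsPL g) (hKN : K ≤ N)
    (hnorm : N ≤ Subgroup.normalizer (K : Set PermR)) (hfixN : HasFixedPointInOrbitals K N)
    (hfixK : HasFixedPointInOrbitals ⁅K, K⁆ K) (hK : K ≠ ⊥) :
    ∃ f ∈ K, ∃ z ∈ Breakpoints f, z ∈ GSupp N \ GSupp K := by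
  by_contra! hno
  have hPLK : ∀ g ∈ K, IsPL g := fun g hg ↦ hPL g (hKN hg)
  obtain ⟨f, hf, u₀, v₀, huv₀, hfuv₀⟩ := exists_isOrbital_of_ne_bot hPLK hfixK hK
  set Z : Set ℝ :=
    {z ∈ Breakpoints f | ∃ u v, IsGroupOrbital K u v ∧ IsOrbital f u v ∧ z ∈ Ioo u v}
  have hZfin : Z.Finite := (hPLK f hf).2.2.subset (sep_subset _ _)
  have hZne : Z.Nonempty := by
    obtain ⟨z, hz, hzf⟩ := (hPLK f hf).exists_mem_breakpoints hfuv₀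
    exact ⟨z, hzf, u₀, v₀, huv₀, hfuv₀, hz⟩
  obtain ⟨z, ⟨-, u, v, huv, hfuv, hzuv⟩, hzmin⟩ := exists_min_image Z id hZfin hZne
  have huN : u ∈ GSupp N := huv.left_mem_GSupp hPL hKN hnorm hfixN
  have hfu : IsLocallyAffineAt f u :=
    isLocallyAffineAt_of_notMem_breakpoints (GSupp_subset_Ioo hPL huN) fun hu ↦
      hno f hf u hu ⟨huN, huv.2.2.1⟩
  obtain ⟨p, hpu, hfpu⟩ := huv.exists_isOrbital_left hPLK hfixK hf hfuv hfu
  obtain ⟨w, hw, hwf⟩ := (hPLK f hf).exists_mem_breakpoints hfpu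
  exact (hzmin w ⟨hwf, p, u, hpu, hfpu, hw⟩).not_gt (hw.2.trans hzuv.1)

theorem exists_mem_breakpoints_GSupp_derivedSubgroup_diff (hPL : ∀ g ∈ G, IsPL g)
    (hn : derivedSubgroup G n = ⊥) {i : ℕ} (hi : derivedSubgroup G i ≠ ⊥) :
    ∃ g ∈ G, ∃ z ∈ Breakpoints g,
      z ∈ GSupp (derivedSubgroup G i) \ GSupp (derivedSubgroup G (i + 1)) := by
  have hle := derivedSubgroup_le G
  have hPLD : ∀ g ∈ derivedSubgroup G i, IsPL g := fun g hg ↦ hPL g (hle i hg)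
  have hfix := hasFixedPointInOrbitals_derivedSubgroup hPL hn
  by_cases hsucc : derivedSubgroup G (i + 1) = ⊥
  · obtain ⟨g, hg, u, v, huv, hguv⟩ :=
      exists_isOrbital_of_ne_bot hPLD (derivedSubgroup_succ G i ▸ hfix i) hi
    obtain ⟨z, hz, hzg⟩ := (hPLD g hg).exists_mem_breakpoints hguv
    exact ⟨g, hle i hg, z, hzg, huv.2.1 hz, by rw [hsucc, GSupp_bot]; exact notMem_empty z⟩
  · obtain ⟨g, hg, z, hz⟩ := exists_mem_breakpoints_GSupp_diff hPLD
      (derivedSubgroup_anti G i.le_succ) ((hle i).trans (le_normalizer_derivedSubgroup G (i + 1)))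
      (hfix i) (derivedSubgroup_succ G (i + 1) ▸ hfix (i + 1)) hsucc
    exact ⟨g, hle _ hg, z, hz⟩

end FixedPoints

section Counting

variable {G : Subgroup PermR} {S : Set ℝ} {n : ℕ}

theorem ncard_inter_GSupp_derivedSubgroup_lt (hPL : ∀ g ∈ G, IsPL g)
    (hn : derivedSubgroup G n = ⊥) (hfin : S.Finite)
    (hS : ∀ g ∈ G, ∀ z ∈ Breakpoints g, ∃ s ∈ S, ∃ k ∈ G, ap k s = z) {i : ℕ}
    (hi : derivedSubgroup G i ≠ ⊥) :
    (S ∩ GSupp (derivedSubgroup G (i + 1))).ncard < (S ∩ GSupp (derivedSubgroup G i)).ncard := by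
  obtain ⟨g, hg, z, hzg, hzi, hzsucc⟩ :=
    exists_mem_breakpoints_GSupp_derivedSubgroup_diff hPL hn hi
  obtain ⟨s, hs, k, hk, rfl⟩ := hS g hg z hzg
  rw [ap_mem_GSupp_iff (le_normalizer_derivedSubgroup G _) hk] at hzi hzsucc
  refine ncard_lt_ncard (ssubset_iff_exists.2 ⟨?_, s, ⟨hs, hzi⟩, fun h ↦ hzsucc h.2⟩)
    (hfin.inter_of_left _)
  exact inter_subset_inter_right S (GSupp_mono (derivedSubgroup_anti G i.le_succ))

theorem derivedSubgroup_ncard_eq_bot (hPL : ∀ g ∈ G, IsPL g) (hn : derivedSubgroup G n = ⊥)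
    (hfin : S.Finite) (hS : ∀ g ∈ G, ∀ z ∈ Breakpoints g, ∃ s ∈ S, ∃ k ∈ G, ap k s = z) :
    derivedSubgroup G S.ncard = ⊥ := by
  by_contra hne
  have hcount : ∀ i ≤ S.ncard + 1, (S ∩ GSupp (derivedSubgroup G i)).ncard + i ≤ S.ncard := by
    intro i hi
    induction i with
    | zero => exact ncard_inter_le_ncard_left _ _ hfin
    | succ i ih =>
      have hi_ne : derivedSubgroup G i ≠ ⊥ := fun hbot ↦ hne <| le_bot_iff.1 <|
        (derivedSubgroup_anti G (Nat.le_of_succ_le_succ hi)).trans hbot.le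
      have hlt := ncard_inter_GSupp_derivedSubgroup_lt hPL hn hfin hS hi_ne
      have := ih (Nat.le_of_succ_le hi)
      lia
  have := hcount (S.ncard + 1) le_rfl
  lia

end Counting

theorem statement1_general (X : Set PermR) (hB : (BreakSet X).Finite)
    (hPL : ∀ g ∈ Subgroup.closure X, IsPL g) (hsol : Group.IsSolvable (Subgroup.closure X)) :
    derivedLength (Subgroup.closure X) ≤ (BreakSet X).ncard := by
  obtain ⟨n, hn⟩ := hsol.solvable
  refine Nat.sInf_le (derivedSubgroup_eq_bot_iff.1 ?_)
  exact derivedSubgroup_ncard_eq_bot hPL (derivedSubgroup_eq_bot_iff.2 hn) hB fun g hg ↦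
    exists_ap_eq_of_mem_breakpoints_closure hPL hg

theorem statement1 (X : Set PermR) (hXfin : X.Finite)
    (G : Subgroup PermR) (hG : G = Subgroup.closure X)
    (hPL : ∀ g ∈ G, IsPL g) (hsol : IsSolvable ↥G) :
    derivedLength ↥G ≤ (BreakSet X).ncard := by
  subst hG
  exact statement1_general X (hXfin.biUnion fun g hg ↦ (hPL g (Subgroup.subset_closure hg)).2.2)
    hPL hsol

end PLPaper
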